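/- arXiv:1511.00827 — 2 statements merged into one kernel-verified Lean document; each statement's English description precedes it below -/
import Mathlib

section
/- Let p ≥ 1 be an integer, k an algebraically closed field, B = k[x,y,z]/(x² + y³ + z^{6p+1}), and 𝔪 = (x,y,z)B. Then the extended Rees algebra 𝓡'(𝔪) = B[𝔪t, t⁻¹] ⊆ B[t, t⁻¹] is isomorphic as a k-algebra to k[X,Y,Z,U]/(X² + Y³U + Z^{6p+1}U^{6p−1}), via the map sending X ↦ xt, Y ↦ yt, Z ↦ zt, U ↦ t⁻¹. -/
open LaurentPolynomial

/-- The extended Rees algebra `B[It, t⁻¹]`: the `B`-subalgebra of the Laurent polynomial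
ring `B[t, t⁻¹]` generated by `t⁻¹` and the elements `b·t` with `b ∈ I`. -/
noncomputable def extendedReesAlgebra (B : Type*) [CommRing B] (I : Ideal B) :
    Subalgebra B (LaurentPolynomial B) :=
  Algebra.adjoin B
    ({LaurentPolynomial.T (-1)} ∪
      ((fun b => LaurentPolynomial.C b * LaurentPolynomial.T 1) '' (I : Set B)))

set_option synthInstance.maxHeartbeats 1000000
set_option maxHeartbeats 2000000

namespace Stmt11

variable (p : ℕ) (k : Type*) [Field k]

/-- The ring `B = k[x,y,z]/(x² + y³ + z^{6p+1})`, with `x = X 0`, `y = X 1`, `z = X 2`. -/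
abbrev B : Type _ :=
  MvPolynomial (Fin 3) k ⧸
    (Ideal.span {(MvPolynomial.X 0 : MvPolynomial (Fin 3) k) ^ 2 +
      MvPolynomial.X 1 ^ 3 + MvPolynomial.X 2 ^ (6 * p + 1)})

/-- The images `x, y, z` of the variables in `B`. -/
noncomputable def v (i : Fin 3) : B p k :=
  Ideal.Quotient.mk _ (MvPolynomial.X i)

/-!
Let `A = R[X₁, …, Xₙ]/J`, and let `ρ : R[X₁, …, Xₙ, U] → A[t, t⁻¹]` send `Xᵢ` to `xᵢt` and `U` to
`t⁻¹`. The image of `ρ` contains `A` because `xᵢ = (xᵢt)t⁻¹`, hence it is the extended Rees algebra.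
For the kernel, a large power of `U` turns any `g` into a polynomial `∑ⱼ qⱼ(X₁U, …, XₙU) Uʲ`, which
`ρ` sends to `∑ⱼ qⱼ(x) t⁻ʲ`. Therefore `ρ g = 0` if and only if some `U ^ N * g` lies in the ideal
generated by the `f(X₁U, …, XₙU)`, `f ∈ J`. If `J = (f)` and `f(X₁U, …, XₙU) = U ^ d * F` with `U`
a non-zero-divisor modulo `F`, that condition reduces to `F ∣ g`. It suffices for this that
`F(X₁, …, Xₙ, 0)`, the initial form of `f`, be a non-zero-divisor; for `xᵃ + yᵇ + zᶜ` with `a < b`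
and `a < c` it is `xᵃ`.
-/

section ExtendedRees

open MvPolynomial (X aeval aeval_X)

variable {R A : Type*} [CommRing R] [CommRing A] [Algebra R A] {n : ℕ}

variable (R) in
/-- The `R`-algebra map `R[X₁, …, Xₙ, U] → A[t, t⁻¹]`, `Xᵢ ↦ xᵢt`, `U ↦ t⁻¹`, that presents the
extended Rees algebra of the ideal `(x₁, …, xₙ)`. The variable `U` is the last one. -/
noncomputable def reesHom (x : Fin n → A) : MvPolynomial (Fin (n + 1)) R →ₐ[R] A[T;T⁻¹] :=
  aeval (Fin.snoc (α := fun _ => A[T;T⁻¹]) (fun i => C (x i) * T 1) (T (-1)))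

/-- The total transform `f(X₁U, …, XₙU)` of a polynomial `f(X₁, …, Xₙ)`; factoring out a power of
`U` gives the strict transform. The variable `U` is the last one. -/
noncomputable def totalTransform :
    MvPolynomial (Fin n) R →ₐ[R] MvPolynomial (Fin (n + 1)) R :=
  aeval fun i => X i.castSucc * X (Fin.last n)

/-- The specialization `U = 0` of the last variable. It sends the strict transform of a polynomial
to its initial form at the origin. -/
noncomputable def lastVarZero : MvPolynomial (Fin (n + 1)) R →ₐ[R] MvPolynomial (Fin n) R :=
  aeval (Fin.snoc (α := fun _ => MvPolynomial (Fin n) R) X 0)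

@[simp]
theorem reesHom_X_castSucc (x : Fin n → A) (i : Fin n) :
    reesHom R x (X i.castSucc) = C (x i) * T 1 := by
  simp [reesHom]

@[simp]
theorem reesHom_X_last (x : Fin n → A) : reesHom R x (X (Fin.last n)) = T (-1) := by
  simp [reesHom]

@[simp]
theorem totalTransform_X (i : Fin n) :
    totalTransform (X i : MvPolynomial (Fin n) R) = X i.castSucc * X (Fin.last n) :=
  aeval_X ..

@[simp]
theorem lastVarZero_X_castSucc (i : Fin n) :
    lastVarZero (X i.castSucc : MvPolynomial (Fin (n + 1)) R) = X i := by
  simp [lastVarZero]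

@[simp]
theorem lastVarZero_X_last :
    lastVarZero (X (Fin.last n) : MvPolynomial (Fin (n + 1)) R) = 0 := by
  simp [lastVarZero]

theorem reesHom_totalTransform (x : Fin n → A) (f : MvPolynomial (Fin n) R) :
    reesHom R x (totalTransform f) = C (aeval x f) := by
  have h : (reesHom R x).comp totalTransform =
      (Algebra.algHom R A A[T;T⁻¹]).comp (aeval x) := by
    ext1 i
    simp only [AlgHom.comp_apply, totalTransform_X, map_mul, reesHom_X_castSucc, reesHom_X_last,
      mul_assoc, ← T_add, aeval_X, Int.add_right_neg, T_zero, mul_one]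
    rfl
  exact DFunLike.congr_fun h f

theorem range_reesHom (x : Fin n → A) (hx : Function.Surjective (aeval (R := R) x)) :
    (reesHom R x).range =
      (extendedReesAlgebra A (Ideal.span (Set.range x))).restrictScalars R := by
  have C_mem (a : A) : C a ∈ (reesHom R x).range := by
    obtain ⟨f, rfl⟩ := hx a
    exact ⟨totalTransform f, reesHom_totalTransform x f⟩
  have C_mul_T_mem (b : A) (hb : b ∈ Ideal.span (Set.range x)) :
      C b * T 1 ∈ (reesHom R x).range := by
    induction hb using Submodule.span_induction with
    | mem _ hb =>
      obtain ⟨i, rfl⟩ := hb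
      exact ⟨X i.castSucc, reesHom_X_castSucc x i⟩
    | zero => simp
    | add b c _ _ hb hc => simpa [add_mul] using add_mem hb hc
    | smul a b _ hb => simpa [mul_assoc] using mul_mem (C_mem a) hb
  apply le_antisymm
  · rw [reesHom, ← Algebra.adjoin_range_eq_range_aeval, Algebra.adjoin_le_iff, Set.range_subset_iff]
    intro i
    refine Algebra.subset_adjoin ?_
    cases i using Fin.lastCases with
    | last => simp
    | cast i => exact Or.inr ⟨x i, Ideal.subset_span ⟨i, rfl⟩, by simp⟩
  · intro r hr
    induction hr using Algebra.adjoin_induction with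
    | mem _ hr =>
      rcases hr with rfl | ⟨b, hb, rfl⟩
      · exact ⟨X (Fin.last n), reesHom_X_last x⟩
      · exact C_mul_T_mem b hb
    | algebraMap a => exact C_mem a
    | add _ _ _ _ hr hs => exact add_mem hr hs
    | mul _ _ _ _ hr hs => exact mul_mem hr hs

theorem exists_eval₂_totalTransform_eq_X_pow_mul (g : MvPolynomial (Fin (n + 1)) R) :
    ∃ (N : ℕ) (q : Polynomial (MvPolynomial (Fin n) R)),
      q.eval₂ (totalTransform (R := R) (n := n)) (X (Fin.last n)) = X (Fin.last n) ^ N * g := by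
  induction g using MvPolynomial.induction_on with
  | C r => exact ⟨0, Polynomial.C (MvPolynomial.C r), by simp [totalTransform]⟩
  | add g h hg hh =>
    obtain ⟨N, q, hq⟩ := hg
    obtain ⟨M, s, hs⟩ := hh
    refine ⟨N + M, q * Polynomial.X ^ M + s * Polynomial.X ^ N, ?_⟩
    simp only [Polynomial.eval₂_add, Polynomial.eval₂_mul, Polynomial.eval₂_X_pow, hq, hs]
    ring
  | mul_X g i hg =>
    obtain ⟨N, q, hq⟩ := hg
    cases i using Fin.lastCases with
    | last =>
      refine ⟨N, q * Polynomial.X, ?_⟩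
      rw [Polynomial.eval₂_mul, Polynomial.eval₂_X, hq, mul_assoc]
    | cast i =>
      refine ⟨N + 1, q * Polynomial.C (X i), ?_⟩
      rw [Polynomial.eval₂_mul, Polynomial.eval₂_C, hq, RingHom.coe_coe, totalTransform_X]
      ring

theorem reesHom_eval₂_totalTransform (x : Fin n → A) (q : Polynomial (MvPolynomial (Fin n) R)) :
    reesHom R x (q.eval₂ (totalTransform (R := R) (n := n)) (X (Fin.last n))) =
      invert (Polynomial.toLaurent (q.map (aeval (R := R) x))) := by
  induction q using Polynomial.induction_on' with
  | add q s hq hs => simp [Polynomial.eval₂_add, hq, hs]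
  | monomial j f =>
    rw [Polynomial.eval₂_monomial, Polynomial.map_monomial, ← Polynomial.C_mul_X_pow_eq_monomial,
      Polynomial.toLaurent_C_mul_X_pow]
    simp only [RingHom.coe_coe, map_mul, map_pow, reesHom_totalTransform, reesHom_X_last, T_pow,
      invert_C, invert_T, mul_neg_one]

theorem mem_ker_reesHom_iff (x : Fin n → A) (g : MvPolynomial (Fin (n + 1)) R) :
    g ∈ RingHom.ker (reesHom R x) ↔
      ∃ N : ℕ, X (Fin.last n) ^ N * g ∈
        (RingHom.ker (aeval (R := R) x)).map (totalTransform (R := R) (n := n)) := by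
  constructor
  · intro hg
    obtain ⟨N, q, hq⟩ := exists_eval₂_totalTransform_eq_X_pow_mul g
    have q_map : q.map (aeval (R := R) x : MvPolynomial (Fin n) R →+* A) = 0 := by
      have h := reesHom_eval₂_totalTransform x q
      rw [hq, map_mul, RingHom.mem_ker.mp hg, mul_zero, eq_comm,
        EmbeddingLike.map_eq_zero_iff] at h
      exact Polynomial.toLaurent_eq_zero.mp h
    have q_coeff (j : ℕ) : q.coeff j ∈ RingHom.ker (aeval (R := R) x) := by
      simpa using congrArg (Polynomial.coeff · j) q_map
    refine ⟨N, ?_⟩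
    rw [← hq, Polynomial.eval₂_eq_sum_range]
    exact Ideal.sum_mem _ fun j _ => Ideal.mul_mem_right _ _ (Ideal.mem_map_of_mem _ (q_coeff j))
  · rintro ⟨N, hN⟩
    have map_le : (RingHom.ker (aeval (R := R) x)).map (totalTransform (R := R) (n := n)) ≤
        RingHom.ker (reesHom R x) := by
      refine Ideal.map_le_iff_le_comap.mpr fun f hf => ?_
      rw [Ideal.mem_comap, RingHom.mem_ker, reesHom_totalTransform, RingHom.mem_ker.mp hf, map_zero]
    have h := RingHom.mem_ker.mp (map_le hN)
    rwa [map_mul, map_pow, reesHom_X_last, T_pow, (isUnit_T _).mul_right_eq_zero] at h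

theorem X_last_dvd_of_lastVarZero_eq_zero {g : MvPolynomial (Fin (n + 1)) R}
    (hg : lastVarZero g = 0) : X (Fin.last n) ∣ g := by
  let π := Ideal.Quotient.mkₐ R (Ideal.span {(X (Fin.last n) : MvPolynomial (Fin (n + 1)) R)})
  have hπ : π.comp ((MvPolynomial.rename Fin.castSucc).comp lastVarZero) = π := by
    ext i
    cases i using Fin.lastCases with
    | last => simp [π]
    | cast i => simp
  have h : π g = 0 := by simpa [hg] using (DFunLike.congr_fun hπ g).symm
  exact Ideal.mem_span_singleton.mp (Ideal.Quotient.eq_zero_iff_mem.mp h)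

theorem dvd_of_dvd_X_last_pow_mul {F g : MvPolynomial (Fin (n + 1)) R}
    (hF : IsRegular (lastVarZero F)) {N : ℕ} (h : F ∣ X (Fin.last n) ^ N * g) : F ∣ g := by
  induction N with
  | zero => simpa using h
  | succ N ih =>
    obtain ⟨q, hq⟩ := h
    have q_zero : lastVarZero q = 0 := by
      refine hF.left.mul_left_eq_zero_iff.mp ?_
      rw [← map_mul, ← hq]
      simp
    obtain ⟨s, rfl⟩ := X_last_dvd_of_lastVarZero_eq_zero q_zero
    refine ih ⟨s, (MvPolynomial.X_mul_cancel_left_iff (i := Fin.last n)).mp ?_⟩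
    linear_combination hq

theorem ker_reesHom_eq_span {x : Fin n → A} {f : MvPolynomial (Fin n) R}
    (hf : RingHom.ker (aeval (R := R) x) = Ideal.span {f})
    {d : ℕ} {F : MvPolynomial (Fin (n + 1)) R} (hF : totalTransform f = X (Fin.last n) ^ d * F)
    (hF₀ : IsRegular (lastVarZero F)) :
    RingHom.ker (reesHom R x) = Ideal.span {F} := by
  ext g
  simp only [mem_ker_reesHom_iff, hf, Ideal.map_span, Set.image_singleton, hF,
    Ideal.mem_span_singleton]
  constructor
  · rintro ⟨N, hN⟩
    exact dvd_of_dvd_X_last_pow_mul hF₀ (dvd_of_mul_left_dvd hN)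
  · exact fun hg => ⟨d, mul_dvd_mul_left _ hg⟩

theorem reesHom_fin_three (x : Fin 3 → A) :
    reesHom R x = aeval ![C (x 0) * T 1, C (x 1) * T 1, C (x 2) * T 1, T (-1)] := by
  ext1 i
  rw [aeval_X]
  cases i using Fin.lastCases with
  | last => exact reesHom_X_last x
  | cast i => fin_cases i <;> exact reesHom_X_castSucc x _

end ExtendedRees

section PhamBrieskorn

open MvPolynomial (X aeval)

variable {R : Type*} [CommRing R] {a b c : ℕ}

theorem totalTransform_phamBrieskorn (hab : a ≤ b) (hac : a ≤ c) :
    totalTransform (X 0 ^ a + X 1 ^ b + X 2 ^ c : MvPolynomial (Fin 3) R) =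
      X 3 ^ a * (X 0 ^ a + X 1 ^ b * X 3 ^ (b - a) + X 2 ^ c * X 3 ^ (c - a)) := by
  obtain ⟨b, rfl⟩ := Nat.exists_eq_add_of_le hab
  obtain ⟨c, rfl⟩ := Nat.exists_eq_add_of_le hac
  have h (i : Fin 3) : totalTransform (X i : MvPolynomial (Fin 3) R) = X i.castSucc * X 3 :=
    totalTransform_X i
  simp only [map_add, map_pow, h, Fin.reduceCastSucc, Nat.add_sub_cancel_left]
  ring

theorem lastVarZero_phamBrieskorn (hab : a < b) (hac : a < c) :
    lastVarZero (X 0 ^ a + X 1 ^ b * X 3 ^ (b - a) + X 2 ^ c * X 3 ^ (c - a) :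
      MvPolynomial (Fin 4) R) = X 0 ^ a := by
  have h₀ : lastVarZero (X 0 : MvPolynomial (Fin 4) R) = X 0 := lastVarZero_X_castSucc 0
  have h₃ : lastVarZero (X 3 : MvPolynomial (Fin 4) R) = 0 := lastVarZero_X_last
  simp [h₀, h₃, (Nat.sub_pos_of_lt hab).ne', (Nat.sub_pos_of_lt hac).ne']

variable (R a b c) in
/-- The coordinate ring `R[x, y, z]/(xᵃ + yᵇ + zᶜ)` of a Pham–Brieskorn surface, with
`x = X 0`, `y = X 1`, `z = X 2`. -/
abbrev PhamBrieskorn : Type _ :=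
  MvPolynomial (Fin 3) R ⧸ Ideal.span {(X 0 ^ a + X 1 ^ b + X 2 ^ c : MvPolynomial (Fin 3) R)}

variable (R a b c) in
/-- The coordinate functions `x, y, z` on a Pham–Brieskorn surface. -/
noncomputable def PhamBrieskorn.coord (i : Fin 3) : PhamBrieskorn R a b c :=
  Ideal.Quotient.mk _ (X i)

theorem PhamBrieskorn.aeval_coord :
    aeval (coord R a b c) = Ideal.Quotient.mkₐ R (Ideal.span {X 0 ^ a + X 1 ^ b + X 2 ^ c}) := by
  ext i
  simp [coord]

theorem PhamBrieskorn.range_coord :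
    Set.range (coord R a b c) = {coord R a b c 0, coord R a b c 1, coord R a b c 2} := by
  ext
  simp [Fin.exists_fin_succ, eq_comm]

open PhamBrieskorn (coord aeval_coord range_coord) in
theorem stmt11_general (hab : a < b) (hac : a < c) :
    RingHom.ker (aeval ![C (coord R a b c 0) * T 1, C (coord R a b c 1) * T 1,
        C (coord R a b c 2) * T 1, T (-1)] :
        MvPolynomial (Fin 4) R →ₐ[R] LaurentPolynomial (PhamBrieskorn R a b c)) =
      Ideal.span {X 0 ^ a + X 1 ^ b * X 3 ^ (b - a) + X 2 ^ c * X 3 ^ (c - a)} ∧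
    Set.range (aeval ![C (coord R a b c 0) * T 1, C (coord R a b c 1) * T 1,
        C (coord R a b c 2) * T 1, T (-1)] :
        MvPolynomial (Fin 4) R →ₐ[R] LaurentPolynomial (PhamBrieskorn R a b c)) =
      (extendedReesAlgebra (PhamBrieskorn R a b c)
        (Ideal.span {coord R a b c 0, coord R a b c 1, coord R a b c 2}) : Set _) := by
  have ker_aeval : RingHom.ker (aeval (coord R a b c)) =
      Ideal.span {(X 0 ^ a + X 1 ^ b + X 2 ^ c : MvPolynomial (Fin 3) R)} := by
    rw [aeval_coord]
    exact Ideal.Quotient.mkₐ_ker R _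
  have aeval_surjective : Function.Surjective (aeval (R := R) (coord R a b c)) := by
    rw [aeval_coord]
    exact Ideal.Quotient.mkₐ_surjective R _
  rw [← reesHom_fin_three, ← range_coord]
  refine ⟨ker_reesHom_eq_span ker_aeval (totalTransform_phamBrieskorn hab.le hac.le) ?_,
    congrArg SetLike.coe (range_reesHom _ aeval_surjective)⟩
  rw [lastVarZero_phamBrieskorn hab hac]
  exact MvPolynomial.isRegular_X_pow a

end PhamBrieskorn

/-- For `p ≥ 1` and `k` algebraically closed, the extended Rees
algebra `𝓡'(𝔪) = B[𝔪t, t⁻¹] ⊆ B[t,t⁻¹]` of `𝔪 = (x,y,z) ⊆ B = k[x,y,z]/(x²+y³+z^{6p+1})`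
is isomorphic over `k` to `k[X,Y,Z,U]/(X² + Y³U + Z^{6p+1}U^{6p-1})` via
`X ↦ xt`, `Y ↦ yt`, `Z ↦ zt`, `U ↦ t⁻¹`:  the `k`-algebra map
`k[X,Y,Z,U] → B[t,t⁻¹]` so defined has kernel `(X² + Y³U + Z^{6p+1}U^{6p-1})` and its
image is exactly `𝓡'(𝔪)`. -/
theorem stmt11 (hp : 1 ≤ p) [IsAlgClosed k] :
    RingHom.ker (MvPolynomial.aeval
        (![LaurentPolynomial.C (v p k 0) * LaurentPolynomial.T 1,
           LaurentPolynomial.C (v p k 1) * LaurentPolynomial.T 1,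
           LaurentPolynomial.C (v p k 2) * LaurentPolynomial.T 1,
           LaurentPolynomial.T (-1)] : Fin 4 → LaurentPolynomial (B p k)) :
        MvPolynomial (Fin 4) k →ₐ[k] LaurentPolynomial (B p k)).toRingHom =
      Ideal.span {(MvPolynomial.X 0 : MvPolynomial (Fin 4) k) ^ 2 +
        MvPolynomial.X 1 ^ 3 * MvPolynomial.X 3 +
        MvPolynomial.X 2 ^ (6 * p + 1) * MvPolynomial.X 3 ^ (6 * p - 1)} ∧
    Set.range (MvPolynomial.aeval
        (![LaurentPolynomial.C (v p k 0) * LaurentPolynomial.T 1,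
           LaurentPolynomial.C (v p k 1) * LaurentPolynomial.T 1,
           LaurentPolynomial.C (v p k 2) * LaurentPolynomial.T 1,
           LaurentPolynomial.T (-1)] : Fin 4 → LaurentPolynomial (B p k)) :
        MvPolynomial (Fin 4) k →ₐ[k] LaurentPolynomial (B p k)) =
      (extendedReesAlgebra (B p k) (Ideal.span {v p k 0, v p k 1, v p k 2}) :
        Set (LaurentPolynomial (B p k))) := by
  have h := stmt11_general (R := k) (a := 2) (b := 3) (c := 6 * p + 1) (by omega) (by omega)
  simp only [Nat.reduceSub, Nat.reduceSubDiff, pow_one] at h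
  exact h

end Stmt11
end

section
/- Let p ≥ 1 be an integer and k an algebraically closed field. Then the hypersurface ring k[X,Y,Z,U]/(X² + Y³U + Z^{6p+1}U^{6p−1}) is a Cohen–Macaulay normal integral domain. -/
/-! Auxiliary definitions.

Mathlib does not yet know about excellent rings; the excellence hypothesis of the paper
is used only to guarantee the existence of resolutions and of the normal Hilbert
polynomial, which we hypothesize directly where needed. -/

/-- The length `ℓ_R(M)` of a module, defined as the Krull dimension of its lattice of
submodules (for modules of finite length this is the usual Jordan–Hölder length). -/
noncomputable def moduleLength (R M : Type*) [CommRing R] [AddCommGroup M] [Module R M] :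
    WithBot ℕ∞ :=
  Order.krullDim (Submodule R M)

/-- `x` is integral over the ideal `I`: it satisfies an equation of integral dependence
`x ^ n + c 1 * x ^ (n-1) + ⋯ + c n = 0` with `c i ∈ I ^ i`. -/
def IsIntegralOverIdeal {A : Type*} [CommRing A] (I : Ideal A) (x : A) : Prop :=
  ∃ n : ℕ, 0 < n ∧ ∃ c : ℕ → A, (∀ i, 1 ≤ i → i ≤ n → c i ∈ I ^ i) ∧
    x ^ n + ∑ i ∈ Finset.Icc 1 n, c i * x ^ (n - i) = 0

/-- The integral closure `J̄` of an ideal `J`: the set of elements integral over `J`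
(this set is an ideal; we take the ideal it generates). -/
noncomputable def idealIntegralClosure {A : Type*} [CommRing A] (I : Ideal A) : Ideal A :=
  Ideal.span {x | IsIntegralOverIdeal I x}

/-- An ideal is integrally closed if it contains every element integral over it. -/
def IdealIsIntegrallyClosed {A : Type*} [CommRing A] (I : Ideal A) : Prop :=
  ∀ x, IsIntegralOverIdeal I x → x ∈ I

/-- A Noetherian local ring is Cohen–Macaulay if some regular sequence contained in the
maximal ideal has length equal to the Krull dimension of the ring. -/
def IsCohenMacaulayLocalRing (R : Type*) [CommRing R] : Prop :=
  IsNoetherianRing R ∧ ∃ h : IsLocalRing R,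
    letI := h
    ∃ rs : List R, (∀ x ∈ rs, x ∈ IsLocalRing.maximalIdeal R) ∧
      RingTheory.Sequence.IsRegular R rs ∧ (rs.length : WithBot ℕ∞) = ringKrullDim R

/-- A Noetherian ring is Cohen–Macaulay if all its localizations at primes are
Cohen–Macaulay local rings. -/
def IsCohenMacaulayRing (R : Type*) [CommRing R] : Prop :=
  IsNoetherianRing R ∧ ∀ (P : Ideal R) (hP : P.IsPrime),
    letI := hP
    IsCohenMacaulayLocalRing (Localization.AtPrime P)

/-- A Cohen–Macaulay normal domain. -/
def IsCMNormalDomain (R : Type*) [CommRing R] : Prop :=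
  IsCohenMacaulayRing R ∧ IsDomain R ∧ IsIntegrallyClosed R

set_option synthInstance.maxHeartbeats 1000000
set_option maxHeartbeats 2000000

/-!
Put `f = Y³U + Z^{6p+1}U^{6p-1}`. The hypersurface ring is the free quadratic algebra `S` over
`A = k[Y, Z, U]` obtained by adjoining a square root `X` of `-f`.

* `S` is integral and flat over `A`. A regular sequence of `A_𝔭` therefore stays regular in `S_𝔓`
  for `𝔓` above `𝔭`, and `ht 𝔓 ≤ ht 𝔭`, so `S` inherits the Cohen–Macaulay property from `A`.
* `U` divides `f` exactly once, so `X² + f` is Eisenstein at `U` and `S` is a domain.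
* `A` is factorial, so `S` is normal once, for every prime `π` of `A`, `z / π` is integral only if
  `π ∣ z`. Integrality of `z / π` gives `π ∣ tr z` and `π² ∣ N z`. Differentiating `N z` then gives
  `π ∣ z`, provided `π` does not divide all partial derivatives of `f`.
* A prime dividing them all would divide `Y³U` and `Z^{6p+1}U^{6p-1}`, by Euler's relations and the
  coprimality of `3, 6p + 1` and of `6p + 1, 6p - 1`, in every characteristic. So it would be `U`,
  which does not divide `∂f/∂U`.
-/

section CohenMacaulay

open IsLocalRing RingTheory.Sequence

theorem isCohenMacaulayLocalRing_of_isWeaklyRegular {R : Type*} [CommRing R] [IsNoetherianRing R]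
    [IsLocalRing R] {rs : List R} (hrs : IsWeaklyRegular R rs)
    (hmem : ∀ r ∈ rs, r ∈ maximalIdeal R) (hdim : ringKrullDim R ≤ rs.length) :
    IsCohenMacaulayLocalRing R := by
  have hreg : IsRegular R rs := .of_isWeaklyRegular_of_mem_maximalIdeal R hmem hrs
  have : Nontrivial (R ⧸ Ideal.ofList rs) :=
    Ideal.Quotient.nontrivial_iff.mpr fun h ↦ hreg.top_ne_smul (by simp [h])
  refine ⟨‹_›, ‹_›, rs, hmem, hreg, hdim.antisymm' ?_⟩
  rw [← ringKrullDim_add_length_eq_ringKrullDim_of_isRegular rs hreg]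
  exact le_add_of_nonneg_left ringKrullDim_nonneg_of_nontrivial

theorem IsCohenMacaulayLocalRing.of_ringEquiv {R S : Type*} [CommRing R] [CommRing S]
    (hR : IsCohenMacaulayLocalRing R) (e : R ≃+* S) : IsCohenMacaulayLocalRing S := by
  obtain ⟨hN, hL, rs, hmem, hreg, hlen⟩ := hR
  have : IsLocalRing S := e.isLocalRing
  have : IsNoetherianRing S := isNoetherianRing_of_ringEquiv R e
  refine isCohenMacaulayLocalRing_of_isWeaklyRegular (rs := rs.map e) ?_ ?_ ?_
  · let : RingHomInvPair (e : R →+* S) e.symm := RingHomInvPair.of_ringEquiv e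
    let : RingHomInvPair (e.symm : S →+* R) e := RingHomInvPair.of_ringEquiv e.symm
    let f : R ≃ₛₗ[(e : R →+* S)] S := { e with map_smul' := fun r x ↦ map_mul e r x }
    exact (f.isWeaklyRegular_congr' rs).mp hreg.toIsWeaklyRegular
  · simpa using hmem
  · simpa [hlen] using (ringKrullDim_eq_of_ringEquiv e).ge

theorem IsCohenMacaulayRing.of_ringEquiv {R S : Type*} [CommRing R] [CommRing S]
    (hR : IsCohenMacaulayRing R) (e : R ≃+* S) : IsCohenMacaulayRing S := by
  have := hR.1
  refine ⟨isNoetherianRing_of_ringEquiv R e, fun P hP ↦ ?_⟩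
  exact (hR.2 (P.comap e) inferInstance).of_ringEquiv
    (IsLocalization.ringEquivOfRingEquiv _ _ e (e.map_primeCompl_comap_eq P))

theorem IsCohenMacaulayLocalRing.of_flat {A B : Type*} [CommRing A] [CommRing B] [IsLocalRing B]
    [IsNoetherianRing B] [Algebra A B] [Module.Flat A B] [IsLocalHom (algebraMap A B)]
    (hA : IsCohenMacaulayLocalRing A)
    (hdim : ringKrullDim B ≤ ringKrullDim A) : IsCohenMacaulayLocalRing B := by
  obtain ⟨-, _, rs, hmem, hreg, hlen⟩ := hA
  refine isCohenMacaulayLocalRing_of_isWeaklyRegular hreg.toIsWeaklyRegular.of_flat ?_ ?_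
  · simpa using hmem
  · simpa [hlen] using hdim

theorem isCohenMacaulayLocalRing_localizationAtPrime {R : Type*} [CommRing R]
    [IsNoetherianRing R] (P : Ideal R) [P.IsPrime] {rs : List R} (hrs : IsWeaklyRegular R rs)
    (hmem : ∀ r ∈ rs, r ∈ P) (hdim : P.height ≤ rs.length) :
    IsCohenMacaulayLocalRing (Localization.AtPrime P) := by
  have : IsNoetherianRing (Localization.AtPrime P) :=
    IsLocalization.isNoetherianRing P.primeCompl _ ‹_›
  refine isCohenMacaulayLocalRing_of_isWeaklyRegular
    (hrs.of_isLocalization (Localization.AtPrime P) P.primeCompl) ?_ ?_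
  · simpa only [List.forall_mem_map, IsLocalization.AtPrime.to_map_mem_maximal_iff _ P] using hmem
  · rw [IsLocalization.AtPrime.ringKrullDim_eq_height P, List.length_map]
    exact_mod_cast hdim

theorem isCohenMacaulayRing_of_field (k : Type*) [Field k] : IsCohenMacaulayRing k := by
  refine ⟨inferInstance, fun P hP ↦ ?_⟩
  refine isCohenMacaulayLocalRing_localizationAtPrime P (.nil _ _) (by simp) ?_
  simp [Ideal.eq_bot_of_prime P]

theorem height_le_height_under {A S : Type*} [CommRing A] [CommRing S] [Algebra A S]
    [Algebra.IsIntegral A S] (P : Ideal S) [P.IsPrime] : P.height ≤ (P.under A).height := by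
  have hmono : StrictMono (PrimeSpectrum.comap (algebraMap A S)) := fun I J hIJ ↦
    Ideal.IsIntegral.comap_lt_comap (R := A) (I := I.asIdeal) (J := J.asIdeal) hIJ
  have := Order.height_le_height_apply_of_strictMono _ hmono ⟨P, ‹_›⟩
  rwa [← PrimeSpectrum.height_eq_orderHeight, ← PrimeSpectrum.height_eq_orderHeight] at this

theorem IsCohenMacaulayRing.of_isIntegral_of_flat {A S : Type*} [CommRing A] [CommRing S]
    [Algebra A S] [IsNoetherianRing S] [Algebra.IsIntegral A S] [Module.Flat A S]
    (hA : IsCohenMacaulayRing A) : IsCohenMacaulayRing S := by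
  refine ⟨‹_›, fun P hP ↦ ?_⟩
  have : IsNoetherianRing (Localization.AtPrime P) :=
    IsLocalization.isNoetherianRing P.primeCompl _ ‹_›
  let := Localization.AtPrime.algebraOfLiesOver (P.under A) P
  have : IsLocalHom (algebraMap (Localization.AtPrime (P.under A)) (Localization.AtPrime P)) :=
    Localization.isLocalHom_localRingHom (P.under A) P (algebraMap A S) Ideal.LiesOver.over
  refine (hA.2 (P.under A) inferInstance).of_flat ?_
  rw [IsLocalization.AtPrime.ringKrullDim_eq_height (P.under A)
      (Localization.AtPrime (P.under A)),
    IsLocalization.AtPrime.ringKrullDim_eq_height P (Localization.AtPrime P)]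
  exact_mod_cast height_le_height_under P

section Polynomial

open Polynomial

theorem isWeaklyRegular_cons_map_C {A : Type*} [CommRing A] {rs : List A}
    (hrs : IsWeaklyRegular A rs) {g : A[X]} (hg : g.Monic) :
    IsWeaklyRegular A[X] (g :: rs.map C) := by
  refine .cons hg.isRegular.left.isSMulRegular ?_
  have : Module.Free A (A[X] ⧸ Ideal.span {g}) := hg.free_quotient
  have hflat : IsWeaklyRegular (A[X] ⧸ Ideal.span {g}) rs :=
    (isWeaklyRegular_map_algebraMap_iff _ _ rs).mp hrs.of_flat
  let e : QuotSMulTop g A[X] ≃ₗ[A[X]] A[X] ⧸ Ideal.span {g} :=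
    Submodule.quotEquivOfEq _ _
      (by rw [← Submodule.ideal_span_singleton_smul, smul_eq_mul, Ideal.mul_top])
  exact (isWeaklyRegular_map_algebraMap_iff A[X] _ rs).mpr
    (((e.restrictScalars A).isWeaklyRegular_congr rs).mpr hflat)

theorem isCohenMacaulayLocalRing_localizationAtPrime_polynomial {A : Type*} [CommRing A]
    [IsLocalRing A] (hA : IsCohenMacaulayLocalRing A) (P : Ideal A[X]) [P.IsPrime]
    (hP : P.comap C = maximalIdeal A) : IsCohenMacaulayLocalRing (Localization.AtPrime P) := by
  obtain ⟨_, _, rs, hmem, hreg, hlen⟩ := hA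
  have hmemC : ∀ r ∈ rs.map (C : A →+* A[X]), r ∈ P := by
    simpa [← Ideal.mem_comap, hP] using hmem
  have hmax : (P.comap C).IsMaximal := hP ▸ maximalIdeal.isMaximal A
  by_cases hmin : P = (P.comap C).map C
  · refine isCohenMacaulayLocalRing_localizationAtPrime P
      (hreg.toIsWeaklyRegular.of_flat (S := A[X])) hmemC ?_
    rw [← maximalIdeal_height_eq_ringKrullDim] at hlen
    rw [hmin, height_map_C, hP, List.length_map]
    exact_mod_cast hlen.ge
  · obtain ⟨g, hg, hgP⟩ := exists_monic_span_sup_map_eq A P hmax hmin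
    have hgmem : g ∈ P := hgP ▸ Ideal.mem_sup_right (Ideal.mem_span_singleton_self g)
    refine isCohenMacaulayLocalRing_localizationAtPrime P
      (isWeaklyRegular_cons_map_C hreg.toIsWeaklyRegular hg) (by simpa [hgmem] using hmemC) ?_
    have hdim : (P.height : WithBot ℕ∞) ≤ ringKrullDim A[X] :=
      Ideal.height_le_ringKrullDim_of_ne_top Ideal.IsPrime.ne_top'
    rw [ringKrullDim_of_isNoetherianRing, ← hlen] at hdim
    simpa using! WithBot.coe_le_coe.mp hdim

theorem IsCohenMacaulayLocalRing.localizationAtPrime_of_under_eq {R S : Type*} [CommRing R]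
    [CommRing S] [Algebra R S] (M : Submonoid R) [IsLocalization M S] {P : Ideal R} [P.IsPrime]
    {Q : Ideal S} [Q.IsPrime] (hQP : Q.under R = P)
    (hQ : IsCohenMacaulayLocalRing (Localization.AtPrime Q)) :
    IsCohenMacaulayLocalRing (Localization.AtPrime P) := by
  subst hQP
  have : IsLocalization.AtPrime (Localization.AtPrime Q) (Q.under R) :=
    IsLocalization.isLocalization_isLocalization_atPrime_isLocalization M _ Q
  exact hQ.of_ringEquiv (IsLocalization.algEquiv (Q.under R).primeCompl
    (Localization.AtPrime Q) (Localization.AtPrime (Q.under R))).toRingEquiv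

attribute [local instance] Polynomial.algebra Polynomial.isLocalization in
theorem IsCohenMacaulayRing.polynomial {A : Type*} [CommRing A] (hA : IsCohenMacaulayRing A) :
    IsCohenMacaulayRing A[X] := by
  have := hA.1
  refine ⟨inferInstance, fun P hP ↦ ?_⟩
  let q := P.comap C
  let M := q.primeCompl.map (C : A →+* A[X])
  let Q := P.map (algebraMap A[X] (Localization.AtPrime q)[X])
  have hdisj : Disjoint (M : Set A[X]) P :=
    Set.disjoint_left.mpr fun _ ⟨_, ha, hax⟩ hx ↦ ha (by subst hax; exact hx)
  have hQ : Q.IsPrime := IsLocalization.isPrime_of_isPrime_disjoint M _ P hP hdisj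
  have hQP : Q.under A[X] = P := IsLocalization.under_map_of_isPrime_disjoint M _ hP hdisj
  have hQq : (Q.comap C).under A = q := calc
    (Q.under (Localization.AtPrime q)).under A = (Q.under A[X]).under A := by
      rw [Ideal.under_under, Ideal.under_under]
    _ = q := by rw [hQP]; rfl
  exact (isCohenMacaulayLocalRing_localizationAtPrime_polynomial (hA.2 q inferInstance) Q
    (Localization.AtPrime.eq_maximalIdeal_iff_under_eq.mp hQq)).localizationAtPrime_of_under_eq
    M hQP

theorem IsCohenMacaulayRing.mvPolynomial {A : Type*} [CommRing A] (hA : IsCohenMacaulayRing A)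
    (ι : Type*) [Finite ι] : IsCohenMacaulayRing (MvPolynomial ι A) := by
  induction ι using Finite.induction_empty_option with
  | of_equiv e h => exact h.of_ringEquiv (MvPolynomial.renameEquiv A e).toRingEquiv
  | h_empty => exact hA.of_ringEquiv (MvPolynomial.isEmptyRingEquiv A _).symm
  | h_option h =>
    exact h.polynomial.of_ringEquiv (MvPolynomial.optionEquivLeft A _).toRingEquiv.symm

end Polynomial

end CohenMacaulay

section Normality

theorem dvd_of_isIntegral_div {A L : Type*} [CommRing A] [IsDomain A] [IsIntegrallyClosed A]
    [Field L] [Algebra A L] [FaithfulSMul A L] {x d : A} (hd : d ≠ 0)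
    (h : IsIntegral A (algebraMap A L x / algebraMap A L d)) : d ∣ x := by
  let K := FractionRing A
  let φ : K →ₐ[A] L :=
    IsFractionRing.liftAlgHom (g := Algebra.ofId A L) (FaithfulSMul.algebraMap_injective A L)
  have hφ : φ (algebraMap A K x / algebraMap A K d) = algebraMap A L x / algebraMap A L d := by
    rw [map_div₀, φ.commutes, φ.commutes]
  rw [← hφ, isIntegral_algHom_iff φ φ.toRingHom.injective] at h
  obtain ⟨y, hy⟩ := IsIntegrallyClosed.algebraMap_eq_of_integral h
  rw [eq_div_iff (by simpa using hd), ← map_mul] at hy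
  exact ⟨y, by rw [mul_comm, IsFractionRing.injective A K hy]⟩

section FractionField

variable {A S K : Type*} [CommRing A] [CommRing S] [Algebra A S] [Field K] [Algebra S K]
  [Algebra A K] [IsScalarTower A S K]

theorem isIntegral_algEquiv_div [IsFractionRing S K] (σ : S ≃ₐ[A] S) {s : S} {d : A}
    (h : IsIntegral A (algebraMap S K s / algebraMap A K d)) :
    IsIntegral A (algebraMap S K (σ s) / algebraMap A K d) := by
  let τ : K ≃ₐ[A] K := IsFractionRing.algEquivOfAlgEquiv σ
  have hτ : τ (algebraMap S K s / algebraMap A K d) =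
      algebraMap S K (σ s) / algebraMap A K d := by
    rw [map_div₀, τ.commutes]
    simp [τ]
  exact hτ ▸ h.map τ

theorem algebraMap_dvd_of_forall_prime_dvd [UniqueFactorizationMonoid A] [FaithfulSMul A K]
    (h : ∀ π : A, Prime π → ∀ s : S,
      IsIntegral A (algebraMap S K s / algebraMap A K π) → algebraMap A S π ∣ s)
    {d : A} (hd : d ≠ 0) {s : S} (hs : IsIntegral A (algebraMap S K s / algebraMap A K d)) :
    algebraMap A S d ∣ s := by
  induction d using UniqueFactorizationMonoid.induction_on_prime generalizing s with
  | h₁ => exact absurd rfl hd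
  | h₂ u hu => exact (hu.map (algebraMap A S)).dvd
  | h₃ d π hd₀ hπ ih =>
    have hπK : algebraMap A K π ≠ 0 := by simpa using hπ.ne_zero
    have hdK : algebraMap A K d ≠ 0 := by simpa using hd₀
    rw [map_mul] at hs ⊢
    have hs_π : algebraMap S K s / algebraMap A K π =
        algebraMap A K d * (algebraMap S K s / (algebraMap A K π * algebraMap A K d)) := by
      field_simp
    obtain ⟨s, rfl⟩ := h π hπ s (hs_π ▸ isIntegral_algebraMap.mul hs)
    refine mul_dvd_mul_left _ (ih hd₀ ?_)
    rwa [map_mul, ← IsScalarTower.algebraMap_apply, mul_div_mul_left _ _ hπK] at hs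

theorem isIntegrallyClosed_of_forall_prime_dvd [IsDomain A] [UniqueFactorizationMonoid A]
    [IsDomain S] [FaithfulSMul A S] [Algebra.IsIntegral A S] [IsFractionRing S K]
    (h : ∀ π : A, Prime π → ∀ s : S,
      IsIntegral A (algebraMap S K s / algebraMap A K π) → algebraMap A S π ∣ s) :
    IsIntegrallyClosed S := by
  have : FaithfulSMul A K := .trans A S K
  refine (isIntegrallyClosed_iff K).mpr fun {x} hx ↦ ?_
  obtain ⟨s, t, ht, rfl⟩ := IsFractionRing.div_surjective S x
  have ht_alg : IsAlgebraic A t := (Algebra.IsIntegral.isIntegral t).isAlgebraic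
  obtain ⟨d, hd, t', hdt⟩ := ht_alg.exists_nonzero_dvd ht
  have hdK : algebraMap A K d ≠ 0 := by simpa using hd
  have htK : algebraMap S K t ≠ 0 := by simpa using nonZeroDivisors.ne_zero ht
  have hfrac : algebraMap S K (s * t') / algebraMap A K d =
      algebraMap S K s / algebraMap S K t := by
    rw [div_eq_div_iff hdK htK, IsScalarTower.algebraMap_apply A S K, hdt, ← map_mul, ← map_mul]
    ring_nf
  obtain ⟨y, hy⟩ := algebraMap_dvd_of_forall_prime_dvd h hd (hfrac ▸ isIntegral_trans _ hx)
  refine ⟨y, ?_⟩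
  rw [← hfrac, hy, map_mul, ← IsScalarTower.algebraMap_apply, mul_div_cancel_left₀ _ hdK]

end FractionField

section QuadraticAlgebra

open QuadraticAlgebra

variable {A : Type*} [CommRing A] {a b : A}

/-- The conjugation of a quadratic algebra, as an automorphism over the base ring. -/
def quadraticConj (a b : A) : QuadraticAlgebra A a b ≃ₐ[A] QuadraticAlgebra A a b :=
  AlgEquiv.ofRingEquiv (f := starRingAut) fun r ↦ by
    rw [starRingAut_apply]
    ext <;> simp

theorem quadraticConj_apply (z : QuadraticAlgebra A a b) : quadraticConj a b z = star z := rfl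

theorem dvd_trace_and_sq_dvd_norm [IsDomain A] [IsIntegrallyClosed A]
    [IsDomain (QuadraticAlgebra A a b)] {K : Type*} [Field K] [Algebra (QuadraticAlgebra A a b) K]
    [IsFractionRing (QuadraticAlgebra A a b) K] [Algebra A K]
    [IsScalarTower A (QuadraticAlgebra A a b) K] {z : QuadraticAlgebra A a b} {d : A} (hd : d ≠ 0)
    (h : IsIntegral A (algebraMap _ K z / algebraMap A K d)) :
    d ∣ trace z ∧ d ^ 2 ∣ norm z := by
  have : FaithfulSMul A K := .trans A (QuadraticAlgebra A a b) K
  have hconj := isIntegral_algEquiv_div (quadraticConj a b) h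
  rw [quadraticConj_apply] at hconj
  refine ⟨dvd_of_isIntegral_div (L := K) hd ?_,
    dvd_of_isIntegral_div (L := K) (pow_ne_zero 2 hd) ?_⟩
  · rw [IsScalarTower.algebraMap_apply A (QuadraticAlgebra A a b) K (trace z),
      algebraMap_trace_eq_add_star, map_add, add_div]
    exact h.add hconj
  · rw [IsScalarTower.algebraMap_apply A (QuadraticAlgebra A a b) K (norm z),
      algebraMap_norm_eq_mul_star, map_mul, map_pow, sq, ← div_mul_div_comm]
    exact h.mul hconj

theorem isIntegrallyClosed_quadraticAlgebra [IsDomain A] [UniqueFactorizationMonoid A]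
    [IsDomain (QuadraticAlgebra A a b)]
    (h : ∀ π : A, Prime π → ∀ z : QuadraticAlgebra A a b, π ∣ trace z → π ^ 2 ∣ norm z →
      algebraMap A _ π ∣ z) : IsIntegrallyClosed (QuadraticAlgebra A a b) := by
  refine isIntegrallyClosed_of_forall_prime_dvd (A := A)
    (K := FractionRing (QuadraticAlgebra A a b)) fun π hπ z hz ↦ ?_
  obtain ⟨htrace, hnorm⟩ := dvd_trace_and_sq_dvd_norm hπ.ne_zero hz
  exact h π hπ z htrace hnorm

theorem dvd_derivation_of_sq_dvd {R : Type*} [CommRing R] [Algebra R A] (D : Derivation R A A)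
    {π g : A} (h : π ^ 2 ∣ g) : π ∣ D g := by
  obtain ⟨c, rfl⟩ := h
  refine ⟨π * D c + 2 * c * D π, ?_⟩
  simp only [D.leibniz, D.leibniz_pow, smul_eq_mul, nsmul_eq_mul]
  ring

theorem isIntegrallyClosed_quadraticAlgebra_of_derivation {R : Type*} [CommRing R] [Algebra R A]
    [IsDomain A] [UniqueFactorizationMonoid A] [IsDomain (QuadraticAlgebra A a 0)]
    (h : ∀ π : A, Prime π → ∃ D : Derivation R A A, ¬ π ∣ D a) :
    IsIntegrallyClosed (QuadraticAlgebra A a 0) := by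
  refine isIntegrallyClosed_quadraticAlgebra fun π hπ ⟨x, y⟩ htrace hnorm ↦ ?_
  simp only [trace_def, norm_def, zero_mul, add_zero] at htrace hnorm
  obtain ⟨D, hD⟩ := h π hπ
  have hD_norm : D (x * x - a * y * y) = 2 * x * D x - 2 * a * y * D y - D a * y ^ 2 := by
    simp only [map_sub, D.leibniz, smul_eq_mul]
    ring
  have h2ay : π ∣ 2 * a * y := by
    refine hπ.dvd_of_dvd_pow (n := 2) ?_
    have : (2 * a * y) ^ 2 = a * (2 * x) * (2 * x) - 4 * a * (x * x - a * y * y) := by ring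
    exact this ▸ (htrace.mul_left _).sub (((dvd_pow_self π two_ne_zero).trans hnorm).mul_left _)
  have hDay : π ∣ D a * y ^ 2 := by
    have := dvd_derivation_of_sq_dvd D hnorm
    rw [hD_norm] at this
    exact (dvd_sub_right ((htrace.mul_right _).sub (h2ay.mul_right _))).mp this
  have hy : π ∣ y := hπ.dvd_of_dvd_pow ((hπ.dvd_or_dvd hDay).resolve_left hD)
  have hxx : π ∣ x * x :=
    (dvd_sub_left (hy.mul_left _)).mp ((dvd_pow_self π two_ne_zero).trans hnorm)
  have hx : π ∣ x := or_self_iff.mp (hπ.dvd_or_dvd hxx)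
  exact algebraMap_dvd_iff.mpr ⟨hx, hy⟩

end QuadraticAlgebra

end Normality

section Presentation

open Polynomial

theorem irreducible_X_pow_sub_C_of_prime_dvd {A : Type*} [CommRing A] [IsDomain A] {a π : A}
    (hπ : Prime π) (ha : π ∣ a) (ha2 : ¬ π ^ 2 ∣ a) {n : ℕ} (hn : n ≠ 0) :
    Irreducible (X ^ n - C a) := by
  have hmonic : (X ^ n - C a).Monic := monic_X_pow_sub_C a hn
  refine irreducible_of_eisenstein_criterion ((Ideal.span_singleton_prime hπ.ne_zero).mpr hπ)
    ?_ (fun i hi ↦ ?_) ?_ ?_ hmonic.isPrimitive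
  · rw [hmonic.leadingCoeff, Ideal.mem_span_singleton]
    exact hπ.not_dvd_one
  · rw [degree_X_pow_sub_C (Nat.pos_of_ne_zero hn), Nat.cast_lt] at hi
    rw [Ideal.mem_span_singleton, coeff_sub, coeff_X_pow, if_neg hi.ne, zero_sub, dvd_neg, coeff_C]
    split_ifs
    exacts [ha, dvd_zero π]
  · rw [degree_X_pow_sub_C (Nat.pos_of_ne_zero hn)]
    exact_mod_cast Nat.pos_of_ne_zero hn
  · simpa [Ideal.span_singleton_pow, Ideal.mem_span_singleton, hn.symm] using ha2

/-- The quadratic algebra `A[ω]` with `ω ^ 2 = a`, presented as `A[X] / (X ^ 2 - a)`. -/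
noncomputable def quadraticAlgebraEquivAdjoinRoot {A : Type*} [CommRing A] (a : A) :
    QuadraticAlgebra A a 0 ≃ₐ[A] AdjoinRoot (X ^ 2 - C a) :=
  AlgEquiv.ofAlgHom
    (QuadraticAlgebra.lift ⟨AdjoinRoot.root (X ^ 2 - C a), by
      have := AdjoinRoot.eval₂_root (X ^ 2 - C a)
      simpa [sub_eq_zero, sq, Algebra.smul_def] using this⟩)
    (AdjoinRoot.liftAlgHom (X ^ 2 - C a) (Algebra.ofId A _) QuadraticAlgebra.omega <| by
      simp [sq, QuadraticAlgebra.omega_mul_omega_eq_algebraMap])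
    (AdjoinRoot.algHom_ext (by simp))
    (QuadraticAlgebra.algHom_ext (by simp))

theorem isDomain_quadraticAlgebra_of_prime_dvd {A : Type*} [CommRing A] [IsDomain A]
    [UniqueFactorizationMonoid A] {a π : A} (hπ : Prime π) (ha : π ∣ a) (ha2 : ¬ π ^ 2 ∣ a) :
    IsDomain (QuadraticAlgebra A a 0) :=
  have := AdjoinRoot.isDomain_of_prime
    (irreducible_X_pow_sub_C_of_prime_dvd hπ ha ha2 two_ne_zero).prime
  (quadraticAlgebraEquivAdjoinRoot a).toMulEquiv.isDomain

theorem finSuccEquiv_rename_succ {R : Type*} [CommRing R] {n : ℕ} (a : MvPolynomial (Fin n) R) :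
    MvPolynomial.finSuccEquiv R n (MvPolynomial.rename Fin.succ a) = C a := by
  have : ((MvPolynomial.finSuccEquiv R n).toAlgHom.comp (MvPolynomial.rename Fin.succ)) =
      IsScalarTower.toAlgHom R (MvPolynomial (Fin n) R) (MvPolynomial (Fin n) R)[X] :=
    MvPolynomial.algHom_ext fun i ↦ by simp [MvPolynomial.finSuccEquiv_X_succ]
  exact DFunLike.congr_fun this a

/-- The hypersurface `X₀ ^ 2 = a(X₁, …, Xₙ)` as a quadratic algebra over the polynomial ring in
the last `n` variables. -/
noncomputable def mvPolynomialQuotientEquivQuadraticAlgebra {R : Type*} [CommRing R] {n : ℕ}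
    (a : MvPolynomial (Fin n) R) :
    (MvPolynomial (Fin (n + 1)) R ⧸
      Ideal.span {MvPolynomial.X 0 ^ 2 - MvPolynomial.rename Fin.succ a}) ≃+*
      QuadraticAlgebra (MvPolynomial (Fin n) R) a 0 :=
  (Ideal.quotientEquiv _ (Ideal.span {X ^ 2 - C a}) (MvPolynomial.finSuccEquiv R n).toRingEquiv
    (by simp [Ideal.map_span, MvPolynomial.finSuccEquiv_X_zero, finSuccEquiv_rename_succ])).trans
    (quadraticAlgebraEquivAdjoinRoot a).symm.toRingEquiv

end Presentation

theorem IsCMNormalDomain.of_ringEquiv {R S : Type*} [CommRing R] [CommRing S]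
    (hR : IsCMNormalDomain R) (e : R ≃+* S) : IsCMNormalDomain S := by
  obtain ⟨hCM, _, _⟩ := hR
  exact ⟨hCM.of_ringEquiv e, e.symm.toMulEquiv.isDomain, .of_equiv e⟩

theorem isCMNormalDomain_quadraticAlgebra {R A : Type*} [CommRing R] [CommRing A] [Algebra R A]
    [IsDomain A] [UniqueFactorizationMonoid A] (hA : IsCohenMacaulayRing A) {a ϖ : A}
    (hϖ : Prime ϖ) (hϖa : ϖ ∣ a) (h : ∀ π : A, Prime π → ∃ D : Derivation R A A, ¬ π ∣ D a) :
    IsCMNormalDomain (QuadraticAlgebra A a 0) := by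
  have hϖa2 : ¬ ϖ ^ 2 ∣ a := fun hdvd ↦
    have ⟨D, hD⟩ := h ϖ hϖ
    hD (dvd_derivation_of_sq_dvd D hdvd)
  have := hA.1
  have : IsNoetherianRing (QuadraticAlgebra A a 0) := .of_finite A _
  have := isDomain_quadraticAlgebra_of_prime_dvd hϖ hϖa hϖa2
  exact ⟨hA.of_isIntegral_of_flat, this, isIntegrallyClosed_quadraticAlgebra_of_derivation h⟩

section Surface

open MvPolynomial

theorem dvd_of_dvd_nsmul {A : Type*} [CommRing A] {m n : ℕ} (hmn : m.Coprime n) {π s : A}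
    (hm : π ∣ m • s) (hn : π ∣ n • s) : π ∣ s := by
  obtain ⟨u, v, huv⟩ : IsCoprime (m : A) n := hmn.cast
  rw [nsmul_eq_mul] at hm hn
  have hs : s = u * (m * s) + v * (n * s) := by linear_combination -s * huv
  exact hs ▸ (hm.mul_left u).add (hn.mul_left v)

theorem eq_of_prime_dvd_X {σ k : Type*} [CommRing k] [IsDomain k] {π : MvPolynomial σ k}
    (hπ : Prime π) {i j : σ} (hi : π ∣ X i) (hj : π ∣ X j) : i = j :=
  (X_dvd_X (R := k)).mp ((hπ.irreducible.dvd_symm (X_prime (i := i)).irreducible hi).trans hj)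

theorem X_mul_pderiv_mul_X_pow {σ k : Type*} [CommRing k] {i : σ} {c : MvPolynomial σ k}
    (hc : pderiv i c = 0) (n : ℕ) : X i * pderiv i (c * X i ^ n) = n • (c * X i ^ n) := by
  rw [Derivation.leibniz, hc, smul_zero, add_zero, Derivation.leibniz_pow, pderiv_X_self]
  cases n with
  | zero => simp
  | succ n =>
    simp only [smul_eq_mul, nsmul_eq_mul, Nat.add_sub_cancel]
    ring

variable {k : Type*} [CommRing k]

variable (k) in
/-- The polynomial `Y ^ l * U + Z ^ m * U ^ n` in the variables `Y`, `Z`, `U`, numbered 0, 1, 2.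
Its negative is the function of which the hypersurface adjoins a square root. -/
noncomputable def branchPolynomial (l m n : ℕ) : MvPolynomial (Fin 3) k :=
  X 0 ^ l * X 2 + X 1 ^ m * X 2 ^ n

theorem X_zero_mul_pderiv_branchPolynomial (l m n : ℕ) :
    X 0 * pderiv 0 (branchPolynomial k l m n) = l • (X 0 ^ l * X 2) := by
  have ht : pderiv 0 (X 1 ^ m * X 2 ^ n : MvPolynomial (Fin 3) k) = 0 := by simp
  rw [branchPolynomial, map_add, ht, add_zero, mul_comm (X 0 ^ l),
    X_mul_pderiv_mul_X_pow (by simp)]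

theorem X_one_mul_pderiv_branchPolynomial (l m n : ℕ) :
    X 1 * pderiv 1 (branchPolynomial k l m n) = m • (X 1 ^ m * X 2 ^ n) := by
  have hs : pderiv 1 (X 0 ^ l * X 2 : MvPolynomial (Fin 3) k) = 0 := by simp
  rw [branchPolynomial, map_add, hs, zero_add, mul_comm (X 1 ^ m),
    X_mul_pderiv_mul_X_pow (by simp)]

theorem pderiv_two_branchPolynomial (l m n : ℕ) :
    pderiv 2 (branchPolynomial k l m n) = X 0 ^ l + n • (X 1 ^ m * X 2 ^ (n - 1)) := by
  simp [branchPolynomial, Derivation.leibniz, mul_left_comm]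

theorem X_two_mul_pderiv_branchPolynomial (l m n : ℕ) :
    X 2 * pderiv 2 (branchPolynomial k l m n) = X 0 ^ l * X 2 + n • (X 1 ^ m * X 2 ^ n) := by
  have hs := X_mul_pderiv_mul_X_pow (i := 2) (c := (X 0 ^ l : MvPolynomial (Fin 3) k)) (by simp) 1
  rw [pow_one, one_smul] at hs
  rw [branchPolynomial, map_add, mul_add, hs, X_mul_pderiv_mul_X_pow (by simp)]

theorem exists_not_dvd_pderiv_branchPolynomial [IsDomain k] {l m n : ℕ} (hlm : l.Coprime m)
    (hmn : m.Coprime n) (hn : 2 ≤ n) {π : MvPolynomial (Fin 3) k} (hπ : Prime π) :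
    ∃ i, ¬ π ∣ pderiv i (branchPolynomial k l m n) := by
  by_contra! h
  have hY := (h 0).mul_left (X 0)
  have hZ := (h 1).mul_left (X 1)
  have hU := (h 2).mul_left (X 2)
  rw [X_zero_mul_pderiv_branchPolynomial] at hY
  rw [X_one_mul_pderiv_branchPolynomial] at hZ
  rw [X_two_mul_pderiv_branchPolynomial] at hU
  set s : MvPolynomial (Fin 3) k := X 0 ^ l * X 2
  set t : MvPolynomial (Fin 3) k := X 1 ^ m * X 2 ^ n
  have hs : π ∣ s := by
    refine dvd_of_dvd_nsmul hlm hY ?_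
    have : m • s = m • (s + n • t) - n • m • t := by
      rw [smul_add, smul_comm m n t, add_sub_cancel_right]
    exact this ▸ (dvd_smul_of_dvd m hU).sub (dvd_smul_of_dvd n hZ)
  have ht : π ∣ t := dvd_of_dvd_nsmul hmn hZ ((dvd_add_right hs).mp hU)
  by_cases hX2 : π ∣ X 2
  · have hX0 : π ∣ X 0 ^ l := by
      have h2 := h 2
      rw [pderiv_two_branchPolynomial] at h2
      have htail : π ∣ n • (X 1 ^ m * X 2 ^ (n - 1)) :=
        dvd_smul_of_dvd n ((dvd_pow hX2 (Nat.sub_ne_zero_of_lt hn)).mul_left _)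
      exact (dvd_add_left htail).mp h2
    exact absurd (eq_of_prime_dvd_X hπ (hπ.dvd_of_dvd_pow hX0) hX2) (by decide)
  · have hX0 : π ∣ X 0 := hπ.dvd_of_dvd_pow ((hπ.dvd_or_dvd hs).resolve_right hX2)
    have hX1 : π ∣ X 1 := hπ.dvd_of_dvd_pow
      ((hπ.dvd_or_dvd ht).resolve_right fun hpow ↦ hX2 (hπ.dvd_of_dvd_pow hpow))
    exact absurd (eq_of_prime_dvd_X hπ hX0 hX1) (by decide)

theorem dvd_branchPolynomial (l m : ℕ) {n : ℕ} (hn : n ≠ 0) :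
    X 2 ∣ branchPolynomial k l m n :=
  (dvd_mul_left _ _).add ((dvd_pow_self _ hn).mul_left _)

theorem stmt12_general {l m n : ℕ} (hlm : l.Coprime m) (hmn : m.Coprime n) (hn : 2 ≤ n)
    [IsDomain k] [UniqueFactorizationMonoid k] (hk : IsCohenMacaulayRing k) :
    IsCMNormalDomain (MvPolynomial (Fin 4) k ⧸
      Ideal.span {(X 0 : MvPolynomial (Fin 4) k) ^ 2 + X 1 ^ l * X 3 + X 2 ^ m * X 3 ^ n}) := by
  let f := branchPolynomial k l m n
  have hJacobian (π) (hπ : Prime π) :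
      ∃ D : Derivation k (MvPolynomial (Fin 3) k) (MvPolynomial (Fin 3) k), ¬ π ∣ D (-f) := by
    obtain ⟨i, hi⟩ := exists_not_dvd_pderiv_branchPolynomial hlm hmn hn hπ
    exact ⟨pderiv i, by rwa [map_neg, dvd_neg]⟩
  have hdouble : IsCMNormalDomain (QuadraticAlgebra (MvPolynomial (Fin 3) k) (-f) 0) :=
    isCMNormalDomain_quadraticAlgebra (hk.mvPolynomial (Fin 3)) X_prime
      ((dvd_branchPolynomial l m (by lia)).neg_right) hJacobian
  have hf : (X 0 : MvPolynomial (Fin 4) k) ^ 2 - rename Fin.succ (-f) =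
      X 0 ^ 2 + X 1 ^ l * X 3 + X 2 ^ m * X 3 ^ n := by
    rw [map_neg, sub_neg_eq_add, add_assoc]
    simp [f, branchPolynomial]
  rw [← hf]
  exact hdouble.of_ringEquiv (mvPolynomialQuotientEquivQuadraticAlgebra (-f)).symm

end Surface

theorem coprime_three_six_mul_add_one (p : ℕ) : Nat.Coprime 3 (6 * p + 1) := by
  rw [show 6 * p + 1 = 3 * (2 * p) + 1 by ring]
  simp

theorem coprime_six_mul_add_one_six_mul_sub_one {p : ℕ} (hp : 1 ≤ p) :
    (6 * p + 1).Coprime (6 * p - 1) := by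
  rw [show 6 * p - 1 = 6 * p + 1 - 2 by lia, Nat.coprime_self_sub_right (by lia),
    Nat.coprime_two_right]
  exact ⟨3 * p, by ring⟩

/-- For every integer `p ≥ 1` and every algebraically closed field
`k`, the hypersurface ring `k[X,Y,Z,U]/(X² + Y³U + Z^{6p+1}U^{6p−1})` is a
Cohen–Macaulay normal integral domain. -/
theorem stmt12 (p : ℕ) (hp : 1 ≤ p) (k : Type*) [Field k] [IsAlgClosed k] :
    IsCMNormalDomain
      (MvPolynomial (Fin 4) k ⧸
        (Ideal.span {(MvPolynomial.X 0 : MvPolynomial (Fin 4) k) ^ 2 +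
          MvPolynomial.X 1 ^ 3 * MvPolynomial.X 3 +
          MvPolynomial.X 2 ^ (6 * p + 1) * MvPolynomial.X 3 ^ (6 * p - 1)})) := by
  exact stmt12_general (coprime_three_six_mul_add_one p)
    (coprime_six_mul_add_one_six_mul_sub_one hp) (by lia) (isCohenMacaulayRing_of_field k)
end
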